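/- (Temple property of the fourth field) Let f, b, g_l, q_l, g, q be positive real numbers with q·g_l = q_l·g. Then the left state U_l = (f, b, g_l, q_l), the right state U = (f, b, g, q) and the speed σ = f·b + q_l·(g_l² + g_l·g + g²)/(2g_l) satisfy all four Rankine–Hugoniot conditions of the reduced two-phase thin-film system; that is, every state on the 4-rarefaction line {f = f_l, b = b_l, q/g = q_l/g_l} can also be connected to U_l by a discontinuity satisfying the Rankine–Hugoniot conditions. -/

import Mathlib

/-- The Rankine–Hugoniot conditions of the reduced two-phase thin-film system
for a discontinuity between a left state `(fl, bl, gl, ql)` and a right state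
`(f, b, g, q)` travelling with speed `σ`. -/
def RankineHugoniot (σ fl bl gl ql f b g q : ℝ) : Prop :=
  σ * (f - fl) = (1/2) * (f^2*b - fl^2*bl) ∧
  σ * (b - bl) = (1/2) * (f*b^2 - fl*bl^2) ∧
  σ * (g - gl) = (1/2) * (g^2*q - gl^2*ql) + (f*b*g - fl*bl*gl) ∧
  σ * (q - ql) = (1/2) * (g*q^2 - gl*ql^2) + (f*b*q - fl*bl*ql)

/-! Along the line `(g, q) = w • (α, β)` with `f` and `b` fixed, the last two components of the flux
are `α` and `β` times the scalar flux `w ↦ (α * β / 2) * w ^ 3 + f * b * w`. Hence both jump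
conditions reduce to the one saying that `σ` is the slope of the chord of this cubic. -/

theorem chord_slope_cubic {K : Type*} [Field K] (a c r s : K) :
    (c + a / 2 * (r ^ 2 + r * s + s ^ 2)) * (s - r) =
      (a / 2 * s ^ 3 + c * s) - (a / 2 * r ^ 3 + c * r) := by
  ring

theorem fourth_field_temple_general (f b α β r s : ℝ) :
    RankineHugoniot (f * b + α * β / 2 * (r ^ 2 + r * s + s ^ 2))
      f b (r * α) (r * β) f b (s * α) (s * β) := by
  have scalar_jump := chord_slope_cubic (α * β) (f * b) r s
  refine ⟨by ring, by ring, ?_, ?_⟩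
  · linear_combination α * scalar_jump
  · linear_combination β * scalar_jump

/-- Temple property of the fourth field: every state on the 4-rarefaction
line `{f = f_l, b = b_l, q/g = q_l/g_l}` through `U_l = (f, b, g_l, q_l)` can
also be connected to `U_l` by a discontinuity with speed
`σ = f·b + q_l(g_l² + g_l g + g²)/(2g_l)` satisfying all four
Rankine–Hugoniot conditions. -/
theorem fourth_field_temple (f b gl ql g q : ℝ)
    (hf : 0 < f) (hb : 0 < b) (hgl : 0 < gl) (hql : 0 < ql)
    (hg : 0 < g) (hq : 0 < q)
    (hqg : q * gl = ql * g) :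
    RankineHugoniot (f * b + ql * (gl^2 + gl*g + g^2) / (2*gl))
      f b gl ql f b g q := by
  convert fourth_field_temple_general f b 1 (ql / gl) gl g using 1 <;> field_simp
  rw [hqg, mul_comm]
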